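/- Let T be the monoid presented by generators σ_1,…,σ_{n−1}, ϑ_1,…,ϑ_n subject to the relations: σ_i² = 1; σ_iσ_j = σ_jσ_i if |i−j| > 1; σ_iσ_jσ_i = σ_jσ_iσ_j if |i−j| = 1; ϑ_i² = ϑ_i; ϑ_iϑ_j = ϑ_jϑ_i for i ≠ j; σ_iϑ_i = ϑ_{i+1}σ_i; σ_iϑ_j = ϑ_jσ_i for j ≠ i, i+1; ϑ_iσ_iϑ_i = ϑ_iϑ_{i+1}. Then there is a bijection φ from T onto the set of partial bijections of Fin n (partial equivalences Fin n ≃. Fin n) such that φ(1) is the identity, φ(xy) = φ(x).trans(φ(y)) for all x, y ∈ T, φ(σ_i) is the transposition of i and i+1 (total bijection), and φ(ϑ_i) is the identity map restricted to the complement of {i}. In other words, T is isomorphic to the symmetric inverse monoid IS_n. -/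

import Mathlib

/-!
The presentation of the symmetric inverse monoid `IS_n` from Remark 2 of
Kudryavtseva–Mazorchuk, Section 4.

Generators: `Sum.inl i` represents `σ_{i+1}` for `i : Fin (n-1)`, and `Sum.inr j`
represents `ϑ_{j+1}` for `j : Fin n` (the paper's indices are `i.val + 1`, `j.val + 1`).
-/

/-- Generator type: `Sum.inl i` is `σ_{i+1}`, `Sum.inr j` is `ϑ_{j+1}`. -/
abbrev ISGen (n : ℕ) := Fin (n - 1) ⊕ Fin n

/-- The word `σ_{i+1}` in the free monoid. -/
def fσ {n : ℕ} (i : Fin (n - 1)) : FreeMonoid (ISGen n) := FreeMonoid.of (Sum.inl i)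

/-- The word `ϑ_{j+1}` in the free monoid. -/
def fϑ {n : ℕ} (j : Fin n) : FreeMonoid (ISGen n) := FreeMonoid.of (Sum.inr j)

/-- The point `i` of `{1, …, n}` (0-based: `i.val`). -/
def lo {n : ℕ} (i : Fin (n - 1)) : Fin n := ⟨i.1, by have := i.2; omega⟩

/-- The point `i + 1` of `{1, …, n}` (0-based: `i.val + 1`). -/
def hi {n : ℕ} (i : Fin (n - 1)) : Fin n := ⟨i.1 + 1, by have := i.2; omega⟩

/-- The defining relations of the presentation of `IS_n`. -/
inductive ISRel (n : ℕ) : FreeMonoid (ISGen n) → FreeMonoid (ISGen n) → Prop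
  | sigma_sq (i) : ISRel n (fσ i * fσ i) 1
  | sigma_comm (i j) (h : 1 < Nat.dist i.1 j.1) : ISRel n (fσ i * fσ j) (fσ j * fσ i)
  | braid (i j) (h : Nat.dist i.1 j.1 = 1) :
      ISRel n (fσ i * fσ j * fσ i) (fσ j * fσ i * fσ j)
  | theta_idem (j) : ISRel n (fϑ j * fϑ j) (fϑ j)
  | theta_comm (j j') (h : j ≠ j') : ISRel n (fϑ j * fϑ j') (fϑ j' * fϑ j)
  | sigma_theta (i) : ISRel n (fσ i * fϑ (lo i)) (fϑ (hi i) * fσ i)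
  | sigma_theta_comm (i j) (h : j ≠ lo i) (h' : j ≠ hi i) :
      ISRel n (fσ i * fϑ j) (fϑ j * fσ i)
  | theta_sigma_theta (i) :
      ISRel n (fϑ (lo i) * fσ i * fϑ (lo i)) (fϑ (lo i) * fϑ (hi i))

/-- The monoid `T` given by the presentation above. -/
abbrev ISMonoid (n : ℕ) := PresentedMonoid (ISRel n)

/-- The generator `σ_{i+1}` of `T`. -/
def σS {n : ℕ} (i : Fin (n - 1)) : ISMonoid n := PresentedMonoid.of (ISRel n) (Sum.inl i)

/-- The generator `ϑ_{j+1}` of `T`. -/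
def ϑS {n : ℕ} (j : Fin n) : ISMonoid n := PresentedMonoid.of (ISRel n) (Sum.inr j)

namespace ISP

instance instM (n : ℕ) : Monoid (Fin n ≃. Fin n) where
  mul f g := f.trans g
  one := PEquiv.refl _
  mul_assoc := PEquiv.trans_assoc
  one_mul := PEquiv.refl_trans
  mul_one := PEquiv.trans_refl

theorem mul_app {n : ℕ} (f g : Fin n ≃. Fin n) (x : Fin n) : (f * g) x = (f x).bind g := rfl
theorem one_app {n : ℕ} (x : Fin n) : (1 : Fin n ≃. Fin n) x = some x := rfl

def tP {n : ℕ} (j : Fin n) : Fin n ≃. Fin n where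
  toFun x := if x = j then none else some x
  invFun x := if x = j then none else some x
  inv a b := by grind

theorem tP_app {n : ℕ} (j x : Fin n) : tP j x = if x = j then none else some x := rfl

def sP {n : ℕ} (i : Fin (n-1)) : Fin n ≃. Fin n := (Equiv.swap (lo i) (hi i)).toPEquiv

theorem sP_app {n : ℕ} (i : Fin (n-1)) (x : Fin n) :
    sP i x = if x = lo i then some (hi i) else if x = hi i then some (lo i) else some x := by
  rw [sP, Equiv.toPEquiv_apply, Equiv.swap_apply_def]; split_ifs <;> rfl

theorem sP_some {n : ℕ} (i : Fin (n-1)) (x : Fin n) :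
    sP i x = some (Equiv.swap (lo i) (hi i) x) := rfl

theorem sw_val {n : ℕ} (i : Fin (n-1)) (x : Fin n) :
    (Equiv.swap (lo i) (hi i) x).1 =
      if x.1 = i.1 then i.1 + 1 else if x.1 = i.1 + 1 then i.1 else x.1 := by
  rw [Equiv.swap_apply_def]
  simp only [Fin.ext_iff, lo, hi]
  split_ifs <;> rfl

theorem ite_bind {n : ℕ} (c : Prop) [Decidable c] (x : Fin n) (f : Fin n → Option (Fin n)) :
    (if c then none else some x).bind f = if c then none else f x := by
  split_ifs <;> rfl

theorem ite_none_congr {n : ℕ} (c d : Prop) [Decidable c] [Decidable d] (x y : Fin n)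
    (h : c ↔ d) (h' : ¬ c → x.1 = y.1) :
    (if c then none else some x) = (if d then none else some y) := by
  by_cases hc : c
  · rw [if_pos hc, if_pos (h.1 hc)]
  · rw [if_neg hc, if_neg (fun hd => hc (h.2 hd)), Fin.ext (h' hc)]

def gP {n : ℕ} : ISGen n → (Fin n ≃. Fin n) := Sum.elim sP tP

theorem r1 {n : ℕ} (i : Fin (n-1)) : sP i * sP i = 1 := by
  ext1 x
  simp only [mul_app, one_app, sP_some, Option.bind_some, Equiv.swap_apply_self]

theorem r2 {n : ℕ} (i j : Fin (n-1)) (h : 1 < Nat.dist i.1 j.1) : sP i * sP j = sP j * sP i := by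
  ext1 x
  simp only [mul_app, sP_some, Option.bind_some]
  congr 1
  ext1
  simp only [sw_val]
  unfold Nat.dist at h
  split_ifs <;> omega

theorem r3 {n : ℕ} (i j : Fin (n-1)) (h : Nat.dist i.1 j.1 = 1) :
    sP i * sP j * sP i = sP j * sP i * sP j := by
  ext1 x
  simp only [mul_app, sP_some, Option.bind_some]
  congr 1
  ext1
  simp only [sw_val]
  unfold Nat.dist at h
  have h : i.1 = j.1 + 1 ∨ j.1 = i.1 + 1 := by omega
  generalize i.1 = i at *
  generalize j.1 = j at *
  generalize x.1 = x at *
  have n1 : ∀ a : ℕ, ¬ (a = a + 1 + 1) := by omega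
  have n2 : ∀ a : ℕ, ¬ (a + 1 + 1 = a) := by omega
  rcases h with rfl | rfl
  · rcases (show x = j ∨ x = j + 1 ∨ x = j + 2 ∨ (x ≠ j ∧ x ≠ j + 1 ∧ x ≠ j + 2) by omega)
      with rfl | rfl | rfl | ⟨h1, h2, h3⟩
    all_goals simp [n1, n2, *]
  · rcases (show x = i ∨ x = i + 1 ∨ x = i + 2 ∨ (x ≠ i ∧ x ≠ i + 1 ∧ x ≠ i + 2) by omega)
      with rfl | rfl | rfl | ⟨h1, h2, h3⟩
    all_goals simp [n1, n2, *]

theorem r4 {n : ℕ} (j : Fin n) : tP j * tP j = tP j := by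
  ext1 x
  simp only [mul_app, tP_app, ite_bind]
  split_ifs <;> rfl

theorem r5 {n : ℕ} (i j : Fin n) : tP i * tP j = tP j * tP i := by
  ext1 x
  simp only [mul_app, tP_app, ite_bind]
  split_ifs <;> rfl

theorem r6 {n : ℕ} (i : Fin (n-1)) : sP i * tP (lo i) = tP (hi i) * sP i := by
  ext1 x
  simp only [mul_app, tP_app, ite_bind, sP_some, Option.bind_some]
  refine ite_none_congr _ _ _ _ ?_ (fun _ => rfl)
  simp only [Fin.ext_iff, sw_val]
  simp only [lo, hi]
  split_ifs <;> omega

theorem r7 {n : ℕ} (i : Fin (n-1)) (j : Fin n) (h : j ≠ lo i) (h' : j ≠ hi i) :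
    sP i * tP j = tP j * sP i := by
  ext1 x
  simp only [mul_app, tP_app, ite_bind, sP_some, Option.bind_some]
  refine ite_none_congr _ _ _ _ ?_ (fun _ => rfl)
  simp only [Fin.ext_iff, sw_val, ne_eq] at *
  simp only [lo, hi] at *
  split_ifs <;> omega

theorem r8 {n : ℕ} (i : Fin (n-1)) : tP (lo i) * sP i * tP (lo i) = tP (lo i) * tP (hi i) := by
  ext1 x
  simp only [mul_app, tP_app, ite_bind, sP_some]
  by_cases h0 : x = lo i
  · simp [h0]
  · simp only [if_neg h0, Option.bind_some, tP_app]
    simp only [Fin.ext_iff, lo] at h0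
    apply ite_none_congr
    · simp only [Fin.ext_iff, sw_val]
      simp only [lo, hi]
      split_ifs <;> omega
    · simp only [Fin.ext_iff, sw_val]
      simp only [lo, hi]
      split_ifs <;> omega

def phi (n : ℕ) : ISMonoid n →* (Fin n ≃. Fin n) := PresentedMonoid.lift gP (by
  intro a b h
  cases h with
  | sigma_sq i => exact r1 i
  | sigma_comm i j h => exact r2 i j h
  | braid i j h => exact r3 i j h
  | theta_idem j => exact r4 j
  | theta_comm j j' h => exact r5 j j'
  | sigma_theta i => exact r6 i
  | sigma_theta_comm i j h h' => exact r7 i j h h'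
  | theta_sigma_theta i => exact r8 i)

theorem phi_s {n : ℕ} (i : Fin (n-1)) : phi n (σS i) = (Equiv.swap (lo i) (hi i)).toPEquiv := rfl
theorem phi_t {n : ℕ} (j : Fin n) : phi n (ϑS j) = tP j := rfl

variable {n : ℕ}

theorem ss (i : Fin (n-1)) : σS i * σS i = 1 :=
  PresentedMonoid.mk_eq_mk_of_rel (ISRel.sigma_sq i)
theorem scomm (i j : Fin (n-1)) (h : 1 < Nat.dist i.1 j.1) : σS i * σS j = σS j * σS i :=
  PresentedMonoid.mk_eq_mk_of_rel (ISRel.sigma_comm i j h)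
theorem sbraid (i j : Fin (n-1)) (h : Nat.dist i.1 j.1 = 1) :
    σS i * σS j * σS i = σS j * σS i * σS j :=
  PresentedMonoid.mk_eq_mk_of_rel (ISRel.braid i j h)
theorem tt (j : Fin n) : ϑS j * ϑS j = ϑS j :=
  PresentedMonoid.mk_eq_mk_of_rel (ISRel.theta_idem j)
theorem tcomm (i j : Fin n) : ϑS i * ϑS j = ϑS j * ϑS i := by
  by_cases h : i = j
  · rw [h]
  · exact PresentedMonoid.mk_eq_mk_of_rel (ISRel.theta_comm i j h)
theorem st1 (i : Fin (n-1)) : σS i * ϑS (lo i) = ϑS (hi i) * σS i :=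
  PresentedMonoid.mk_eq_mk_of_rel (ISRel.sigma_theta i)
theorem st2 (i : Fin (n-1)) (j) (h : j ≠ lo i) (h' : j ≠ hi i) : σS i * ϑS j = ϑS j * σS i :=
  PresentedMonoid.mk_eq_mk_of_rel (ISRel.sigma_theta_comm i j h h')
theorem tst (i : Fin (n-1)) : ϑS (lo i) * σS i * ϑS (lo i) = ϑS (lo i) * ϑS (hi i) :=
  PresentedMonoid.mk_eq_mk_of_rel (ISRel.theta_sigma_theta i)

theorem st3 (i : Fin (n-1)) : σS i * ϑS (hi i) = ϑS (lo i) * σS i := by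
  calc σS i * ϑS (hi i) = σS i * (ϑS (hi i) * σS i) * σS i := by
        rw [mul_assoc, mul_assoc, ss, mul_one]
    _ = ϑS (lo i) * σS i := by rw [← st1, ← mul_assoc, ss, one_mul]

theorem tts (i : Fin (n-1)) : ϑS (lo i) * ϑS (hi i) * σS i = ϑS (lo i) * ϑS (hi i) := by
  rw [mul_assoc, ← st1, ← mul_assoc, tst]

/-- general conjugation -/
theorem stw (i : Fin (n-1)) (j : Fin n) :
    σS i * ϑS (Equiv.swap (lo i) (hi i) j) = ϑS j * σS i := by
  rw [Equiv.swap_apply_def]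
  split_ifs with h h'
  · rw [h, st3]
  · rw [h', st1]
  · exact st2 i j h h'

/-- The symmetric part. -/
def H (n k : ℕ) : Submonoid (ISMonoid n) :=
  Submonoid.closure {x | ∃ i : Fin (n-1), i.1 < k ∧ x = σS i}

def s (n : ℕ) (i : ℕ) : ISMonoid n := if h : i < n - 1 then σS ⟨i, h⟩ else 1

def D (n k : ℕ) : ℕ → ISMonoid n
  | 0 => 1
  | m+1 => D n k m * s n (k - m)

theorem s_sq (i : ℕ) : s n i * s n i = 1 := by
  unfold s; split_ifs
  · exact ss _
  · simp

theorem s_comm (i j : ℕ) (h : i + 1 < j) : s n i * s n j = s n j * s n i := by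
  unfold s; split_ifs
  · apply scomm
    simp only [Nat.dist]; omega
  all_goals simp

theorem s_braid (i : ℕ) (h : i + 1 < n - 1) :
    s n (i+1) * s n i * s n (i+1) = s n i * s n (i+1) * s n i := by
  unfold s
  rw [dif_pos h, dif_pos (by omega)]
  apply sbraid
  simp [Nat.dist]

theorem D_comm (k m i : ℕ) (h : i + m < k) : D n k m * s n i = s n i * D n k m := by
  induction m with
  | zero => simp [D]
  | succ m ih =>
    rw [D, mul_assoc, ← s_comm i (k-m) (by omega), ← mul_assoc, ih (by omega), mul_assoc]

theorem D_shift (k m i : ℕ) (hk : k < n - 1) (hi : i + 1 ≤ k) (hm : m ≤ k + 1) (h : k < i + m) :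
    D n k m * s n (i+1) = s n i * D n k m := by
  induction m with
  | zero => omega
  | succ m ih =>
    by_cases h' : k < i + m
    · rw [D, mul_assoc, s_comm (k-m) (i+1) (by omega), ← mul_assoc, ih (by omega) h', mul_assoc]
    · obtain ⟨m, rfl⟩ : ∃ m', m = m' + 1 := ⟨m-1, by omega⟩
      have e1 : k - (m+1) = i := by omega
      have e2 : k - m = i + 1 := by omega
      rw [D, D, e1, e2]
      rw [mul_assoc, mul_assoc, ← mul_assoc (s n (i+1)), s_braid i (by omega), ← mul_assoc,
        ← mul_assoc, D_comm k m i (by omega)]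
      simp only [mul_assoc]

theorem s_mem (i k : ℕ) (h : i < k) : s n i ∈ H n k := by
  unfold s; split_ifs with h'
  · exact Submonoid.subset_closure ⟨_, h, rfl⟩
  · exact one_mem _

theorem D_unit (k m : ℕ) : ∃ y, D n k m * y = 1 := by
  induction m with
  | zero => exact ⟨1, by simp [D]⟩
  | succ m ih =>
    obtain ⟨y, hy⟩ := ih
    exact ⟨s n (k-m) * y, by rw [D, mul_assoc, ← mul_assoc (s n _), s_sq, one_mul, hy]⟩

theorem H_decomp (k : ℕ) (hk : k < n - 1) (x : ISMonoid n) (hx : x ∈ H n (k+1)) :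
    ∃ w ∈ H n k, ∃ m ≤ k + 1, x = w * D n k m := by
  induction hx using Submonoid.closure_induction_right with
  | one => exact ⟨1, one_mem _, 0, by omega, by simp [D]⟩
  | mul_right x hx y hy ih =>
    obtain ⟨i, hi, rfl⟩ := hy
    obtain ⟨w, hw, m, hm, rfl⟩ := ih
    have es : σS i = s n i.1 := by simp [s]
    rw [es]
    generalize i.1 = i at *
    rcases Nat.lt_or_ge (i + m) k with h | h
    · exact ⟨w * s n i, mul_mem hw (s_mem _ _ (by omega)), m, hm, by
        rw [mul_assoc, D_comm k m i h, mul_assoc]⟩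
    rcases Nat.eq_or_lt_of_le h with h | h
    · exact ⟨w, hw, m+1, by omega, by
        rw [D, show k - m = i by omega, mul_assoc]⟩
    rcases Nat.eq_or_lt_of_le h with h | h
    · obtain ⟨m, rfl⟩ : ∃ m', m = m' + 1 := ⟨m-1, by omega⟩
      exact ⟨w, hw, m, by omega, by
        rw [D, show k - m = i by omega, mul_assoc, mul_assoc, s_sq, mul_one]⟩
    · obtain ⟨i, rfl⟩ : ∃ i', i = i' + 1 := ⟨i-1, by omega⟩
      exact ⟨w * s n i, mul_mem hw (s_mem _ _ (by omega)), m, hm, by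
        rw [mul_assoc, D_shift k m i hk (by omega) hm (by omega), mul_assoc]⟩

theorem H_fix (k : ℕ) (x : ISMonoid n) (hx : x ∈ H n k) (a : Fin n) (ha : k < a.1) :
    phi n x a = some a := by
  induction hx using Submonoid.closure_induction_right with
  | one => rfl
  | mul_right x hx y hy ih =>
    obtain ⟨i, hi, rfl⟩ := hy
    rw [map_mul, mul_app, ih, Option.bind_some]
    change sP i a = _
    rw [sP_app, if_neg, if_neg] <;> simp [lo, ISP.H, _root_.hi, Fin.ext_iff] <;> omega

theorem D_app (k m : ℕ) (hk : k < n - 1) (hm : m ≤ k + 1) :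
    phi n (D n k m) ⟨k+1, by omega⟩ = some ⟨k+1-m, by omega⟩ := by
  induction m with
  | zero => rfl
  | succ m ih =>
    rw [D, map_mul, mul_app, ih (by omega), Option.bind_some, s, dif_pos (by omega)]
    change sP _ _ = _
    rw [sP_app, if_neg, if_pos] <;> simp [lo, hi, Fin.ext_iff] <;> omega

theorem H_inj (k : ℕ) (hk : k ≤ n - 1) (x y : ISMonoid n) (hx : x ∈ H n k) (hy : y ∈ H n k)
    (h : phi n x = phi n y) : x = y := by
  induction k generalizing x y with
  | zero =>
    have : H n 0 = ⊥ := by simp [H]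
    rw [this, Submonoid.mem_bot] at hx hy
    rw [hx, hy]
  | succ k ih =>
    obtain ⟨w, hw, m, hm, rfl⟩ := H_decomp k (by omega) x hx
    obtain ⟨w', hw', m', hm', rfl⟩ := H_decomp k (by omega) y hy
    have h1 := congrArg (fun f => f ⟨k+1, by omega⟩) h
    simp only [map_mul, mul_app] at h1
    rw [H_fix k w hw _ (by simp), H_fix k w' hw' _ (by simp), Option.bind_some, Option.bind_some,
      D_app k m (by omega) hm, D_app k m' (by omega) hm'] at h1
    simp at h1
    obtain rfl : m = m' := by omega
    obtain ⟨y, hy⟩ := D_unit (n := n) k m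
    congr 1
    refine ih (by omega) _ _ hw hw' ?_
    have := congrArg (fun f => f * phi n y) h
    simpa only [← map_mul, mul_assoc, hy, mul_one] using this


theorem toPE_inj {p q : Equiv.Perm (Fin n)} (h : p.toPEquiv = q.toPEquiv) : p = q := by
  ext1 x
  have := congrArg (fun f => f x) h
  simpa using this

theorem H_perm (w : ISMonoid n) (hw : w ∈ H n (n-1)) :
    ∃ p : Equiv.Perm (Fin n), phi n w = p.toPEquiv ∧ ∀ j, w * ϑS (p j) = ϑS j * w := by
  induction hw using Submonoid.closure_induction_right with
  | one => exact ⟨1, rfl, by simp⟩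
  | mul_right x hx y hy ih =>
    obtain ⟨i, hi, rfl⟩ := hy
    obtain ⟨p, hp, h⟩ := ih
    refine ⟨p.trans (Equiv.swap (lo i) (_root_.hi i)), ?_, fun j => ?_⟩
    · rw [map_mul, hp, phi_s, Equiv.toPEquiv_trans]; rfl
    · rw [Equiv.trans_apply, mul_assoc, stw, ← mul_assoc, h, mul_assoc]

theorem H_conj (w : ISMonoid n) (hw : w ∈ H n (n-1)) (p : Equiv.Perm (Fin n))
    (hp : phi n w = p.toPEquiv) (j : Fin n) : w * ϑS (p j) = ϑS j * w := by
  obtain ⟨q, hq, h⟩ := H_perm w hw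
  obtain rfl := toPE_inj (hp.symm.trans hq)
  exact h j

theorem H_inv (w : ISMonoid n) (hw : w ∈ H n (n-1)) :
    ∃ u ∈ H n (n-1), w * u = 1 ∧ u * w = 1 := by
  induction hw using Submonoid.closure_induction_right with
  | one => exact ⟨1, one_mem _, by simp⟩
  | mul_right x hx y hy ih =>
    obtain ⟨i, hi, rfl⟩ := hy
    obtain ⟨u, hu, h1, h2⟩ := ih
    refine ⟨σS i * u, mul_mem (Submonoid.subset_closure ⟨i, hi, rfl⟩) hu, ?_, ?_⟩
    · rw [mul_assoc, ← mul_assoc (σS i), ss, one_mul, h1]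
    · rw [mul_assoc, ← mul_assoc u, h2, one_mul, ss]

theorem H_surj (p : Equiv.Perm (Fin n)) : ∃ w ∈ H n (n-1), phi n w = p.toPEquiv := by
  rcases n with _ | m
  · exact ⟨1, one_mem _, by ext1 x; exact x.elim0⟩
  · have hp : p ∈ Submonoid.closure (Set.range fun i : Fin m ↦ Equiv.swap i.castSucc i.succ) := by
      rw [Equiv.Perm.mclosure_swap_castSucc_succ]; trivial
    induction hp using Submonoid.closure_induction_right with
    | one => exact ⟨1, one_mem _, rfl⟩
    | mul_right x hx y hy ih =>
      obtain ⟨i, rfl⟩ := hy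
      obtain ⟨w, hw, h⟩ := ih
      refine ⟨σS (n := m+1) i * w, mul_mem (Submonoid.subset_closure ⟨i, i.2, rfl⟩) hw, ?_⟩
      rw [map_mul, h, phi_s]
      exact (Equiv.toPEquiv_trans _ _).symm

theorem swap_absorb (a b : Fin n) (hab : a ≠ b) (w : ISMonoid n) (hw : w ∈ H n (n-1))
    (h : phi n w = (Equiv.swap a b).toPEquiv) : ϑS a * ϑS b * w = ϑS a * ϑS b := by
  have hn : 0 < n - 1 := by
    have := a.2; have := b.2
    have : a.1 ≠ b.1 := fun h => hab (Fin.ext h)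
    omega
  obtain ⟨i⟩ : Nonempty (Fin (n-1)) := ⟨⟨0, hn⟩⟩
  have hlh : lo i ≠ hi i := by simp [lo, hi, Fin.ext_iff]
  obtain ⟨p, hp⟩ := Equiv.Perm.exists_extending_pair ![lo i, hi i] ![a, b]
    (by intro x y; fin_cases x <;> fin_cases y <;> simp [hlh, hlh.symm])
    (by intro x y; fin_cases x <;> fin_cases y <;> simp [hab, hab.symm])
  have pa : p (lo i) = a := hp 0
  have pb : p (hi i) = b := hp 1
  obtain ⟨v, hv, hvp⟩ := H_surj p
  obtain ⟨u, hu, h1, h2⟩ := H_inv v hv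
  have ca := H_conj v hv p hvp (lo i)
  have cb := H_conj v hv p hvp (hi i)
  rw [pa] at ca
  rw [pb] at cb
  have hσ : σS i ∈ H n (n-1) := Submonoid.subset_closure ⟨i, i.2, rfl⟩
  have key : v * w = σS i * v := by
    refine H_inj (n-1) le_rfl _ _ (mul_mem hv hw) (mul_mem hσ hv) ?_
    rw [map_mul, map_mul, hvp, h, phi_s]
    refine (Equiv.toPEquiv_trans _ _).symm.trans (Eq.trans ?_ (Equiv.toPEquiv_trans _ _))
    congr 1
    have := Equiv.mul_swap_eq_swap_mul p (lo i) (hi i)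
    rw [pa, pb] at this
    exact this.symm
  have cab : v * (ϑS a * ϑS b) = ϑS (lo i) * ϑS (hi i) * v := by
    rw [← mul_assoc, ca, mul_assoc, cb, mul_assoc]
  calc ϑS a * ϑS b * w = u * (v * (ϑS a * ϑS b)) * w := by rw [← mul_assoc u, h2, one_mul]
    _ = u * (ϑS (lo i) * ϑS (hi i) * (v * w)) := by rw [cab]; simp only [mul_assoc]
    _ = u * (ϑS (lo i) * ϑS (hi i) * σS i * v) := by rw [key]; simp only [mul_assoc]
    _ = u * (v * (ϑS a * ϑS b)) := by rw [tts, cab]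
    _ = _ := by rw [← mul_assoc u, h2, one_mul]

def th (l : List (Fin n)) : ISMonoid n := (l.map ϑS).prod

theorem th_cons (a : Fin n) (l : List (Fin n)) : th (a :: l) = ϑS a * th l := by simp [th]

theorem th_comm (a : Fin n) (l : List (Fin n)) : th l * ϑS a = ϑS a * th l := by
  induction l with
  | nil => simp [th]
  | cons b l ih => rw [th_cons, mul_assoc, ih, ← mul_assoc, tcomm, mul_assoc]

theorem th_comm2 (l l' : List (Fin n)) : th l * th l' = th l' * th l := by
  induction l with
  | nil => simp [th]
  | cons b l ih => rw [th_cons, mul_assoc, ih, ← mul_assoc, ← th_comm, mul_assoc]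

theorem th_absorb (a : Fin n) (l : List (Fin n)) (h : a ∈ l) : th l * ϑS a = th l := by
  induction l with
  | nil => simp at h
  | cons b l ih =>
    by_cases hb : a = b
    · subst hb; rw [th_comm, th_cons, ← mul_assoc, tt]
    · rw [th_cons, mul_assoc, ih (by simpa [hb] using h)]

theorem th_sub (l l' : List (Fin n)) (h : ∀ a ∈ l', a ∈ l) : th l * th l' = th l := by
  induction l' with
  | nil => simp [th]
  | cons b l' ih =>
    rw [th_cons, ← mul_assoc, th_absorb _ _ (h b (by simp)), ih (fun a ha => h a (by simp [ha]))]

theorem th_eq (l l' : List (Fin n)) (h : ∀ a, a ∈ l' ↔ a ∈ l) : th l = th l' := by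
  rw [← th_sub l l' (fun a => (h a).1), th_comm2, th_sub l' l (fun a => (h a).2)]

theorem th_app (l : List (Fin n)) (x : Fin n) :
    phi n (th l) x = if x ∈ l then none else some x := by
  induction l with
  | nil => rfl
  | cons b l ih =>
    rw [th_cons, map_mul, mul_app, phi_t, tP_app]
    by_cases h : x = b
    · simp [h]
    · simp [h, ih]

theorem th_fix (l : List (Fin n)) (w : ISMonoid n) (hw : w ∈ H n (n-1)) (p : Equiv.Perm (Fin n))
    (hp : phi n w = p.toPEquiv) (h : ∀ x, x ∉ l → p x = x) : th l * w = th l := by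
  have key : ∀ q : Equiv.Perm {x // x ∈ l}, ∀ w ∈ H n (n-1),
      phi n w = (Equiv.Perm.ofSubtype q).toPEquiv → th l * w = th l := by
    intro q
    induction q using Equiv.Perm.swap_induction_on with
    | one =>
      intro w hw h
      rw [H_inj (n-1) le_rfl w 1 hw (one_mem _) (by rw [h, map_one, map_one]; rfl), mul_one]
    | swap_mul f x y hxy ih =>
      intro w hw h
      obtain ⟨u, hu, hu'⟩ := H_surj (Equiv.Perm.ofSubtype f)
      obtain ⟨v, hv, hv'⟩ := H_surj (Equiv.swap (x : Fin n) y)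
      have e : w = u * v := by
        refine H_inj (n-1) le_rfl _ _ hw (mul_mem hu hv) ?_
        rw [h, map_mul, map_mul, hu', hv', Equiv.Perm.ofSubtype_swap_eq]
        exact Equiv.toPEquiv_trans _ _
      rw [e, ← mul_assoc, ih u hu hu']
      rw [← th_absorb y l y.2, ← th_absorb x l x.2, mul_assoc, mul_assoc, ← mul_assoc (ϑS _),
        swap_absorb _ _ (fun h => hxy (Subtype.ext h)) v hv hv', ← mul_assoc]
  have hl : ∀ x, p x ∈ l ↔ x ∈ l := by
    intro x
    constructor
    · intro h1
      by_contra h2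
      rw [h x h2] at h1
      exact h2 h1
    · intro h1
      by_contra h2
      have := p.injective (h _ h2)
      rw [this] at h2
      exact h2 h1
  refine key (p.subtypePerm hl) w hw ?_
  rw [Equiv.Perm.ofSubtype_subtypePerm]
  · exact hp
  · intro x hx
    by_contra h2
    exact hx (h x h2)

theorem decomp (x : ISMonoid n) : ∃ l : List (Fin n), ∃ w ∈ H n (n-1), x = th l * w := by
  have hx : x ∈ Submonoid.closure (Set.range (PresentedMonoid.of (ISRel n))) := by
    rw [PresentedMonoid.closure_range_of]; trivial
  induction hx using Submonoid.closure_induction_left with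
  | one => exact ⟨[], 1, one_mem _, by simp [th]⟩
  | mul_left y hy x hx ih =>
    obtain ⟨l, w, hw, rfl⟩ := ih
    obtain ⟨i | j, rfl⟩ := hy
    · change ∃ l' : List (Fin n), ∃ w' ∈ H n (n-1), σS i * (th l * w) = th l' * w'
      have : ∃ l', σS i * th l = th l' * σS i := by
        clear hx
        induction l with
        | nil => exact ⟨[], by simp [th]⟩
        | cons a l ih =>
          obtain ⟨l', h⟩ := ih
          refine ⟨Equiv.swap (lo i) (hi i) a :: l', ?_⟩
          have e := stw i (Equiv.swap (lo i) (hi i) a)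
          rw [Equiv.swap_apply_self] at e
          rw [th_cons, th_cons, ← mul_assoc, e, mul_assoc, h, mul_assoc]
      obtain ⟨l', h⟩ := this
      exact ⟨l', σS i * w, mul_mem (Submonoid.subset_closure ⟨i, i.2, rfl⟩) hw, by
        rw [← mul_assoc, h, mul_assoc]⟩
    · exact ⟨j :: l, w, hw, by rw [th_cons, mul_assoc]; rfl⟩

theorem phi_app (l : List (Fin n)) (w : ISMonoid n) (p : Equiv.Perm (Fin n))
    (hp : phi n w = p.toPEquiv) (x : Fin n) :
    phi n (th l * w) x = if x ∈ l then none else some (p x) := by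
  rw [map_mul, mul_app, th_app, hp]
  split_ifs <;> simp

theorem phi_inj : Function.Injective (phi n) := by
  intro x y h
  obtain ⟨l, w, hw, rfl⟩ := decomp x
  obtain ⟨l', w', hw', rfl⟩ := decomp y
  obtain ⟨p, hp, -⟩ := H_perm w hw
  obtain ⟨p', hp', -⟩ := H_perm w' hw'
  have hx : ∀ x, (if x ∈ l then none else some (p x)) = (if x ∈ l' then none else some (p' x)) := by
    intro x
    rw [← phi_app l w p hp, ← phi_app l' w' p' hp', h]
  have hl : ∀ a, a ∈ l' ↔ a ∈ l := by
    intro a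
    have := hx a
    split_ifs at this <;> simp_all
  have hpp : ∀ a, a ∉ l → p a = p' a := by
    intro a ha
    have := hx a
    have h' : a ∉ l' := fun h => ha ((hl a).1 h)
    simpa [ha, h'] using this
  rw [← th_eq l l' hl]
  obtain ⟨u, hu, h1, h2⟩ := H_inv w' hw'
  obtain ⟨q, hq, -⟩ := H_perm u hu
  have hqp : ∀ a, q (p' a) = a := by
    intro a
    have := congrArg (fun x => phi n x a) h1
    simp only [map_mul, mul_app, hp', hq, map_one, one_app] at this
    simpa using this
  have := th_fix l (w * u) (mul_mem hw hu) (p.trans q)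
    (by rw [map_mul, hp, hq]; exact (Equiv.toPEquiv_trans _ _).symm)
    (fun x hx => by rw [Equiv.trans_apply, hpp x hx, hqp])
  calc th l * w = th l * (w * u) * w' := by rw [mul_assoc, mul_assoc, h2, mul_one]
    _ = _ := by rw [this]

theorem phi_surj : Function.Surjective (phi n) := by
  intro f
  obtain ⟨p, hp⟩ := Equiv.Perm.exists_extending_pair
    (fun x : {x // (f x).isSome} => x.1) (fun x => (f x.1).get x.2) Subtype.val_injective (by
      intro x y h
      apply Subtype.ext
      refine f.inj (b := (f x.1).get x.2) (Option.get_mem _) ?_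
      have h' : (f x.1).get x.2 = (f y.1).get y.2 := h
      rw [h']
      exact Option.get_mem _)
  obtain ⟨w, hw, h⟩ := H_surj p
  refine ⟨th ((Finset.univ.filter (fun x => f x = none)).toList) * w, ?_⟩
  ext1 x
  rw [phi_app _ _ p h]
  by_cases hx : f x = none
  · simp [hx]
  · have := hp ⟨x, Option.isSome_iff_ne_none.2 hx⟩
    simp only at this
    simp [hx, this]

end ISP

/-- Remark 2 of Kudryavtseva–Mazorchuk: the monoid `T` presented above is isomorphic to
the symmetric inverse monoid `IS_n` of partial bijections of `Fin n`: there is a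
bijection `φ` from `T` onto `Fin n ≃. Fin n` with `φ(1) = id`,
`φ(xy) = φ(x).trans (φ(y))`, `φ(σ_i)` the transposition `(i, i+1)`, and `φ(ϑ_j)` the
identity restricted to the complement of `{j}`. -/
theorem IS_presentation (n : ℕ) :
    ∃ φ : ISMonoid n → (Fin n ≃. Fin n),
      Function.Bijective φ ∧
      φ 1 = PEquiv.refl (Fin n) ∧
      (∀ x y : ISMonoid n, φ (x * y) = (φ x).trans (φ y)) ∧
      (∀ i : Fin (n - 1), φ (σS i) = (Equiv.swap (lo i) (hi i)).toPEquiv) ∧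
      (∀ j : Fin n, ∀ x : Fin n, φ (ϑS j) x = if x = j then none else some x) := by
  refine ⟨ISP.phi n, ⟨ISP.phi_inj, ISP.phi_surj⟩, rfl, ?_, ISP.phi_s, fun j x => rfl⟩
  intro x y
  exact map_mul (ISP.phi n) x y
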